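/- Let n, d₁, d₂, d₃ ≥ 1 and M₁, M₂, M₃ ∈ ℝ, and suppose a : ℝⁿ × ℝ^{d₁} × ℝ^{d₂} × ℝ^{d₃} → ℂ is smooth and satisfies, for all multi-indices α, β, η, γ, |∂_x^γ ∂_{ξ′}^α ∂_{ξ″}^β ∂_{ξ‴}^η a| ≤ C ⟨(ξ′,ξ″,ξ‴)⟩^{M₁−|α|} ⟨(ξ″,ξ‴)⟩^{M₂−|β|} ⟨ξ‴⟩^{M₃−|η|} for all arguments, where ⟨·⟩ := (1+|·|²)^{1/2}. Then: (i) on the region {|ξ′| ≤ |ξ″|}, for all multi-indices there is C′ with |∂_x^γ ∂_{(ξ′,ξ″)}^α ∂_{ξ‴}^η a| ≤ C′ ⟨(ξ′,ξ″,ξ‴)⟩^{M₁+M₂−|α|} ⟨ξ‴⟩^{M₃−|η|}; and (ii) on the region {|ξ″| ≤ |ξ‴|}, for all multi-indices there is C′ with |∂_x^γ ∂_{ξ′}^α ∂_{(ξ″,ξ‴)}^β a| ≤ C′ ⟨(ξ′,ξ″,ξ‴)⟩^{M₁−|α|} ⟨(ξ″,ξ‴)⟩^{M₂+M₃−|β|}.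 -/

import Mathlib

set_option synthInstance.maxHeartbeats 1000000
set_option maxHeartbeats 1000000

/-- The Japanese bracket `⟨v⟩ = (1 + |v|²)^{1/2}`. -/
noncomputable def jap {d : ℕ} (v : EuclideanSpace ℝ (Fin d)) : ℝ :=
  Real.sqrt (1 + ‖v‖ ^ 2)

/-- The Japanese bracket of a pair. -/
noncomputable def jap2 {d e : ℕ} (u : EuclideanSpace ℝ (Fin d))
    (v : EuclideanSpace ℝ (Fin e)) : ℝ :=
  Real.sqrt (1 + ‖u‖ ^ 2 + ‖v‖ ^ 2)

/-- The Japanese bracket of a triple. -/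
noncomputable def jap3 {d e f : ℕ} (u : EuclideanSpace ℝ (Fin d))
    (v : EuclideanSpace ℝ (Fin e)) (w : EuclideanSpace ℝ (Fin f)) : ℝ :=
  Real.sqrt (1 + ‖u‖ ^ 2 + ‖v‖ ^ 2 + ‖w‖ ^ 2)

/-!
The product rule enters only through multilinearity: splitting each argument of `D^n g` on `E × F`
into its two components and collecting the `E`-components first, by symmetry of `D^n g`, writes
`D^n g` as a sum over subsets `s` of `{1, …, n}` of the mixed partial derivatives of order `#s` in
`E` and `n - #s` in `F`. The hypothesis bounds each of them. Where the first of two adjacent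
frequencies is dominated by the second, the brackets with and without the first are comparable up to
a factor `2`, so any real power of one can be traded for the same power of the other.
-/

section IteratedFDeriv

variable {𝕜 E F G : Type*} [NontriviallyNormedField 𝕜] [NormedAddCommGroup E] [NormedSpace 𝕜 E]
  [NormedAddCommGroup F] [NormedSpace 𝕜 F] [NormedAddCommGroup G] [NormedSpace 𝕜 G]

theorem iteratedFDeriv_two_add_apply (f : E → G) (x : E) (n : ℕ) (v : Fin (n + 2) → E) :
    iteratedFDeriv 𝕜 (n + 2) f x v =
      fderiv 𝕜 (fderiv 𝕜 (iteratedFDeriv 𝕜 n f)) x (v 0) (v 1) (Fin.tail (Fin.tail v)) := by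
  rw [iteratedFDeriv_succ_apply_left, iteratedFDeriv_succ_eq_comp_left]
  have hcomp := LinearIsometryEquiv.comp_fderiv (𝕜 := 𝕜) (E := E →L[𝕜] E [×n]→L[𝕜] G)
    (F := E [×n + 1]→L[𝕜] G) (continuousMultilinearCurryLeftEquiv 𝕜 (fun _ ↦ E) G).symm
    (f := fderiv 𝕜 (iteratedFDeriv 𝕜 n f)) (x := x)
  exact congr($hcomp (v 0) (Fin.tail v))

theorem iteratedFDeriv_iteratedFDeriv_apply_append {f : E → G} {k m N : ℕ} (hN : k + m = N)
    (hf : ContDiff 𝕜 N f) (x : E) (v : Fin k → E) (w : Fin m → E) :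
    iteratedFDeriv 𝕜 k (iteratedFDeriv 𝕜 m f) x v w =
      iteratedFDeriv 𝕜 N f x (Fin.append v w ∘ Fin.cast hN.symm) := by
  induction k generalizing x N with
  | zero =>
    obtain rfl : m = N := by omega
    rw [iteratedFDeriv_zero_apply, Subsingleton.elim v Fin.elim0, Fin.elim0_append]
    rfl
  | succ k ih =>
    obtain rfl : N = k + m + 1 := by omega
    have hinner : DifferentiableAt 𝕜 (iteratedFDeriv 𝕜 (k + m) f) x :=
      (hf.differentiable_iteratedFDeriv (by norm_cast; omega)).differentiableAt
    have houter : DifferentiableAt 𝕜 (iteratedFDeriv 𝕜 k (iteratedFDeriv 𝕜 m f)) x :=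
      ((hf.iteratedFDeriv_right (m := k + 1) (by norm_cast; omega)).differentiable_iteratedFDeriv
        (by norm_cast; omega)).differentiableAt
    have htail : Fin.tail (Fin.append v w ∘ Fin.cast hN.symm) = Fin.append (Fin.tail v) w := by
      rw [← Fin.cons_self_tail v, Fin.append_cons]
      rfl
    have h0 : (Fin.append v w ∘ Fin.cast hN.symm) 0 = v 0 := Fin.append_left v w 0
    have htail_diff : DifferentiableAt 𝕜
        (fun y ↦ iteratedFDeriv 𝕜 k (iteratedFDeriv 𝕜 m f) y (Fin.tail v)) x :=
      houter.continuousMultilinear_apply_const _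
    rw [hinner.iteratedFDeriv_succ_apply_left', houter.iteratedFDeriv_succ_apply_left', htail, h0,
      ← fderiv_continuousMultilinear_apply_const_apply htail_diff]
    simp_rw [ih rfl (hf.of_le (by norm_cast; omega))]
    rfl

theorem iteratedFDeriv_comp_prodMk_right {g : E × F → G} {n : ℕ} (hg : ContDiff 𝕜 n g) (u : E)
    (v : F) :
    iteratedFDeriv 𝕜 n (fun v ↦ g (u, v)) v =
      (iteratedFDeriv 𝕜 n g (u, v)).compContinuousLinearMap fun _ ↦ .inr 𝕜 E F := by
  have hshift : ContDiff 𝕜 n fun q : E × F ↦ g ((u, 0) + q) := by fun_prop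
  have h := (ContinuousLinearMap.inr 𝕜 E F).iteratedFDeriv_comp_right hshift v le_rfl
  simpa [iteratedFDeriv_comp_add_left, Function.comp_def] using h

theorem iteratedFDeriv_comp_prodMk_left {g : E × F → G} {n : ℕ} (hg : ContDiff 𝕜 n g) (u : E)
    (v : F) :
    iteratedFDeriv 𝕜 n (fun u ↦ g (u, v)) u =
      (iteratedFDeriv 𝕜 n g (u, v)).compContinuousLinearMap fun _ ↦ .inl 𝕜 E F := by
  have hshift : ContDiff 𝕜 n fun q : E × F ↦ g ((0, v) + q) := by fun_prop
  have h := (ContinuousLinearMap.inl 𝕜 E F).iteratedFDeriv_comp_right hshift u le_rfl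
  simpa [iteratedFDeriv_comp_add_left, Function.comp_def] using h

theorem contDiff_iteratedFDeriv_param {P : Type*} [NormedAddCommGroup P] [NormedSpace 𝕜 P]
    {f : P → E → G} {g : P → E} {n N : WithTop ℕ∞} {k : ℕ} (hf : ContDiff 𝕜 N (Function.uncurry f))
    (hg : ContDiff 𝕜 n g) (hN : n + k ≤ N) :
    ContDiff 𝕜 n fun q ↦ iteratedFDeriv 𝕜 k (f q) (g q) := by
  have hk : ContDiff 𝕜 k (Function.uncurry f) := hf.of_le (le_add_self.trans hN)
  have hD : ContDiff 𝕜 n fun q ↦ iteratedFDeriv 𝕜 k (Function.uncurry f) (q, g q) :=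
    (hf.iteratedFDeriv_right hN).comp (contDiff_id.prodMk hg)
  have heq (q : P) : iteratedFDeriv 𝕜 k (f q) (g q) =
      ContinuousMultilinearMap.compContinuousLinearMapL (fun _ ↦ .inr 𝕜 P E)
        (iteratedFDeriv 𝕜 k (Function.uncurry f) (q, g q)) :=
    iteratedFDeriv_comp_prodMk_right hk q (g q)
  simp_rw [heq]
  exact (ContinuousMultilinearMap.compContinuousLinearMapL (F := G)
    fun _ : Fin k ↦ ContinuousLinearMap.inr 𝕜 P E).contDiff.comp hD

end IteratedFDeriv

section SumCLM

variable {𝕜 E F G : Type*} [NontriviallyNormedField 𝕜] [NormedAddCommGroup E] [NormedSpace 𝕜 E]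
  [NormedAddCommGroup F] [NormedSpace 𝕜 F] [NormedAddCommGroup G] [NormedSpace 𝕜 G]

variable {ι : Type*} [Fintype ι] {A : ι → Type*} [∀ i, NormedAddCommGroup (A i)]
  [∀ i, NormedSpace 𝕜 (A i)]

theorem norm_compContinuousMultilinearMapL_le {H : Type*} [NormedAddCommGroup H] [NormedSpace 𝕜 H]
    (L : G →L[𝕜] H) (k : ℕ) :
    ‖L.compContinuousMultilinearMapL 𝕜 (fun _ : Fin k ↦ E) G H‖ ≤ ‖L‖ :=
  ContinuousLinearMap.opNorm_le_bound _ (norm_nonneg _) L.norm_compContinuousMultilinearMap_le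

theorem iteratedFDeriv_sum_clm_apply (L : ∀ i, A i →L[𝕜] G) {f : ∀ i, E → A i} {k : ℕ}
    (hf : ∀ i, ContDiff 𝕜 k (f i)) (x : E) :
    iteratedFDeriv 𝕜 k (fun x ↦ ∑ i, L i (f i x)) x =
      ∑ i, (L i).compContinuousMultilinearMapL 𝕜 (fun _ : Fin k ↦ E) (A i) G
        (iteratedFDeriv 𝕜 k (f i) x) := by
  rw [iteratedFDeriv_fun_sum_apply (f := fun i y ↦ L i (f i y))
    fun i _ ↦ ((L i).contDiff.comp (hf i)).contDiffAt]
  exact Finset.sum_congr rfl fun i _ ↦ (L i).iteratedFDeriv_comp_left (hf i).contDiffAt le_rfl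

theorem norm_iteratedFDeriv_sum_clm_le {L : ∀ i, A i →L[𝕜] G} (hL : ∀ i, ‖L i‖ ≤ 1)
    {f : ∀ i, E → A i} {k : ℕ} (hf : ∀ i, ContDiff 𝕜 k (f i)) (x : E) :
    ‖iteratedFDeriv 𝕜 k (fun x ↦ ∑ i, L i (f i x)) x‖ ≤ ∑ i, ‖iteratedFDeriv 𝕜 k (f i) x‖ := by
  rw [iteratedFDeriv_sum_clm_apply L hf]
  refine norm_sum_le_of_le _ fun i _ ↦ ?_
  refine ((L i).norm_compContinuousMultilinearMap_le _).trans ?_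
  exact mul_le_of_le_one_left (norm_nonneg _) (hL i)

theorem norm_iteratedFDeriv₂_sum_clm_le {L : ∀ i, A i →L[𝕜] G}
    (hL : ∀ i, ‖L i‖ ≤ 1) {f : ∀ i, E → F → A i} {k m : ℕ}
    (hf : ∀ i, ContDiff 𝕜 (k + m : ℕ) (Function.uncurry (f i))) (x : E) (y : F) :
    ‖iteratedFDeriv 𝕜 k (fun x ↦ iteratedFDeriv 𝕜 m (fun y ↦ ∑ i, L i (f i x y)) y) x‖ ≤
      ∑ i, ‖iteratedFDeriv 𝕜 k (fun x ↦ iteratedFDeriv 𝕜 m (f i x) y) x‖ := by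
  have hinner (x : E) := iteratedFDeriv_sum_clm_apply (k := m) L (f := fun i ↦ f i x)
    (fun i ↦ ((hf i).of_le (by norm_cast; omega)).comp (contDiff_prodMk_right x)) y
  simp_rw [hinner]
  exact norm_iteratedFDeriv_sum_clm_le
    (L := fun i ↦ (L i).compContinuousMultilinearMapL 𝕜 (fun _ : Fin m ↦ F) (A i) G)
    (f := fun i x ↦ iteratedFDeriv 𝕜 m (f i x) y)
    (fun i ↦ (norm_compContinuousMultilinearMapL_le (L i) m).trans (hL i))
    (fun i ↦ contDiff_iteratedFDeriv_param (hf i) contDiff_const (by norm_cast)) x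

end SumCLM

section MixedFDeriv

/-- Continuous `k`-linear maps from `E` to `H`. This is `E [×k]→L[𝕜] H`; a name of its own, taking
`H` as a normed space, makes instance search use the norm topology of `H` also when `H` is itself a
space of multilinear maps. -/
abbrev NormedMultilinear (𝕜 E H : Type*) [NontriviallyNormedField 𝕜] [NormedAddCommGroup E]
    [NormedSpace 𝕜 E] [NormedAddCommGroup H] [NormedSpace 𝕜 H] (k : ℕ) : Type _ :=
  E [×k]→L[𝕜] H

/-- The mixed partial derivative `D_u^k D_v^m g (u, v)` at `p`, as a `k`-linear map in `u` with
values in `m`-linear maps in `v`. -/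
noncomputable def mixedFDeriv (𝕜 : Type*) {E F G : Type*} [NontriviallyNormedField 𝕜]
    [NormedAddCommGroup E] [NormedSpace 𝕜 E] [NormedAddCommGroup F] [NormedSpace 𝕜 F]
    [NormedAddCommGroup G] [NormedSpace 𝕜 G] (k m : ℕ) (g : E × F → G) (p : E × F) :
    NormedMultilinear 𝕜 E (F [×m]→L[𝕜] G) k :=
  iteratedFDeriv 𝕜 k (fun u ↦ iteratedFDeriv 𝕜 m (fun v ↦ g (u, v)) p.2) p.1

variable {𝕜 E F G : Type*} [NontriviallyNormedField 𝕜] [NormedAddCommGroup E] [NormedSpace 𝕜 E]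
  [NormedAddCommGroup F] [NormedSpace 𝕜 F] [NormedAddCommGroup G] [NormedSpace 𝕜 G]

theorem mixedFDeriv_apply {g : E × F → G} {k m : ℕ} (hg : ContDiff 𝕜 (k + m : ℕ) g) (p : E × F)
    (a : Fin k → E) (b : Fin m → F) :
    mixedFDeriv 𝕜 k m g p a b =
      iteratedFDeriv 𝕜 k (iteratedFDeriv 𝕜 m g) p (fun i ↦ (a i, 0)) (fun i ↦ (0, b i)) := by
  have hm : ContDiff 𝕜 m g := hg.of_le (by norm_cast; omega)
  have hDm : ContDiff 𝕜 k (iteratedFDeriv 𝕜 m g) := hg.iteratedFDeriv_right (by norm_cast)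
  have hcomp := (ContinuousMultilinearMap.compContinuousLinearMapL (F := G)
    fun _ : Fin m ↦ ContinuousLinearMap.inr 𝕜 E F).iteratedFDeriv_comp_left
      (f := fun u ↦ iteratedFDeriv 𝕜 m g (u, p.2)) (x := p.1) (n := k) (by fun_prop) le_rfl
  rw [iteratedFDeriv_comp_prodMk_left hDm] at hcomp
  unfold mixedFDeriv
  simp_rw [iteratedFDeriv_comp_prodMk_right hm]
  exact congr($hcomp a b)

theorem contDiff_mixedFDeriv_param {P : Type*} [NormedAddCommGroup P] [NormedSpace 𝕜 P]
    {f : P → E × F → G} {n N : WithTop ℕ∞} {k m : ℕ} (hf : ContDiff 𝕜 N (Function.uncurry f))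
    (p : E × F) (hN : n + k + m ≤ N) :
    ContDiff 𝕜 n fun q ↦ mixedFDeriv 𝕜 k m (f q) p := by
  have hinner : ContDiff 𝕜 (n + k) fun q : P × E ↦
      iteratedFDeriv 𝕜 m (fun v ↦ f q.1 (q.2, v)) p.2 :=
    contDiff_iteratedFDeriv_param (f := fun (q : P × E) v ↦ f q.1 (q.2, v))
      (hf.comp (f := fun t : (P × E) × F ↦ (t.1.1, t.1.2, t.2)) (by fun_prop)) contDiff_const hN
  exact contDiff_iteratedFDeriv_param
    (f := fun q u ↦ iteratedFDeriv 𝕜 m (fun v ↦ f q (u, v)) p.2) hinner contDiff_const le_rfl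

variable (𝕜 E F G) in
/-- Turns a map that is multilinear in `E` and then in `F` into an `n`-linear map on `E × F`: the
arguments indexed by `s` contribute their `E`-components, the remaining ones their
`F`-components. -/
noncomputable def mergeVars {n : ℕ} (s : Finset (Fin n)) :
    NormedMultilinear 𝕜 E (F [×sᶜ.card]→L[𝕜] G) s.card →L[𝕜] ((E × F) [×n]→L[𝕜] G) :=
  (ContinuousMultilinearMap.curryFinFinset 𝕜 (E × F) G
      rfl rfl).symm.toContinuousLinearEquiv.toContinuousLinearMap ∘L
    ContinuousMultilinearMap.compContinuousLinearMapL (fun _ ↦ .fst 𝕜 E F) ∘L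
    ContinuousLinearMap.compContinuousMultilinearMapL 𝕜 (fun _ ↦ E) _ _
      (ContinuousMultilinearMap.compContinuousLinearMapL fun _ ↦ .snd 𝕜 E F)

theorem mergeVars_apply {n : ℕ} (s : Finset (Fin n))
    (T : NormedMultilinear 𝕜 E (F [×sᶜ.card]→L[𝕜] G) s.card) (w : Fin n → E × F) :
    mergeVars 𝕜 E F G s T w = T (fun i ↦ (w (finSumEquivOfFinset rfl rfl (.inl i))).1)
      fun i ↦ (w (finSumEquivOfFinset rfl rfl (.inr i))).2 :=
  rfl

theorem norm_mergeVars_le_one {n : ℕ} (s : Finset (Fin n)) : ‖mergeVars 𝕜 E F G s‖ ≤ 1 := by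
  refine ContinuousLinearMap.opNorm_le_bound _ zero_le_one fun T ↦ ?_
  refine ContinuousMultilinearMap.opNorm_le_bound (by positivity) fun w ↦ ?_
  rw [mergeVars_apply, one_mul, ← (finSumEquivOfFinset (s := s) rfl rfl).prod_comp,
    Fintype.prod_sum_type, ← mul_assoc]
  refine (ContinuousMultilinearMap.le_opNorm _ _).trans ?_
  gcongr
  · refine (T.le_opNorm _).trans ?_
    gcongr
    exact norm_fst_le _
  · exact norm_snd_le _

end MixedFDeriv

section Symmetry

variable {𝕜 E F G : Type*} [RCLike 𝕜] [NormedAddCommGroup E] [NormedSpace 𝕜 E]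
  [NormedAddCommGroup F] [NormedSpace 𝕜 F] [NormedAddCommGroup G] [NormedSpace 𝕜 G]

theorem iteratedFDeriv_comp_swap_succ {f : E → G} {n : ℕ} (hf : ContDiff 𝕜 (n + 1) f) (x : E)
    (v : Fin (n + 1) → E) (i : Fin n) :
    iteratedFDeriv 𝕜 (n + 1) f x (v ∘ Equiv.swap i.castSucc i.succ) =
      iteratedFDeriv 𝕜 (n + 1) f x v := by
  induction n generalizing x with
  | zero => exact i.elim0
  | succ n ih =>
    cases i using Fin.cases with
    | zero =>
      have hsymm : IsSymmSndFDerivAt 𝕜 (iteratedFDeriv 𝕜 n f) x :=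
        (hf.iteratedFDeriv_right (m := 2) (by norm_cast; omega)).contDiffAt.isSymmSndFDerivAt
          (by simp)
      have htail : Fin.tail (Fin.tail (v ∘ Equiv.swap 0 1)) = Fin.tail (Fin.tail v) := by
        funext j
        exact congrArg v (Equiv.swap_apply_of_ne_of_ne (Fin.succ_ne_zero _)
          fun h ↦ Fin.succ_ne_zero j (Fin.succ_injective _ h))
      rw [iteratedFDeriv_two_add_apply, iteratedFDeriv_two_add_apply, hsymm.eq]
      simp [htail]
    | succ j =>
      have hdiff : DifferentiableAt 𝕜 (iteratedFDeriv 𝕜 (n + 1) f) x :=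
        (hf.differentiable_iteratedFDeriv (by norm_cast; omega)).differentiableAt
      have htail : Fin.tail (v ∘ Equiv.swap j.succ.castSucc j.succ.succ) =
          Fin.tail v ∘ Equiv.swap j.castSucc j.succ := by
        funext l
        simp only [Fin.tail_def, Function.comp_apply, ← Fin.succ_castSucc]
        rw [← (Fin.succ_injective (n + 1)).swap_apply]
      rw [hdiff.iteratedFDeriv_succ_apply_left', hdiff.iteratedFDeriv_succ_apply_left', htail,
        funext fun y ↦ ih (hf.of_le (by norm_cast; omega)) y (Fin.tail v) j]
      congr 1

theorem iteratedFDeriv_comp_perm {f : E → G} {n : ℕ} (hf : ContDiff 𝕜 n f) (x : E)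
    (v : Fin n → E) (σ : Equiv.Perm (Fin n)) :
    iteratedFDeriv 𝕜 n f x (v ∘ σ) = iteratedFDeriv 𝕜 n f x v := by
  cases n with
  | zero => rw [Subsingleton.elim σ 1, Equiv.Perm.coe_one, Function.comp_id]
  | succ n =>
    have hσ : σ ∈ Submonoid.closure (Set.range fun i : Fin n ↦ Equiv.swap i.castSucc i.succ) :=
      Equiv.Perm.mclosure_swap_castSucc_succ n ▸ Submonoid.mem_top σ
    induction hσ using Submonoid.closure_induction generalizing v with
    | mem σ hσ =>
      obtain ⟨i, rfl⟩ := hσ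
      exact iteratedFDeriv_comp_swap_succ (mod_cast hf) x v i
    | one => rfl
    | mul σ τ _ _ hσ hτ => rw [Equiv.Perm.coe_mul, ← Function.comp_assoc, hτ, hσ]

theorem iteratedFDeriv_iteratedFDeriv_apply {f : E → G} {k m N : ℕ} (e : Fin k ⊕ Fin m ≃ Fin N)
    (hf : ContDiff 𝕜 N f) (x : E) (v : Fin N → E) :
    iteratedFDeriv 𝕜 k (iteratedFDeriv 𝕜 m f) x (v ∘ e ∘ Sum.inl) (v ∘ e ∘ Sum.inr) =
      iteratedFDeriv 𝕜 N f x v := by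
  obtain rfl : k + m = N := by simpa using Fintype.card_congr e
  have h : Fin.append (v ∘ e ∘ Sum.inl) (v ∘ e ∘ Sum.inr) = v ∘ (finSumFinEquiv.symm.trans e) := by
    funext i
    refine Fin.addCases (fun j ↦ ?_) (fun j ↦ ?_) i <;> simp
  rw [iteratedFDeriv_iteratedFDeriv_apply_append rfl hf,
    ← iteratedFDeriv_comp_perm hf x v (finSumFinEquiv.symm.trans e)]
  exact congrArg _ h

theorem iteratedFDeriv_prod_eq_sum_mergeVars {g : E × F → G} {n : ℕ} (hg : ContDiff 𝕜 n g)
    (p : E × F) :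
    iteratedFDeriv 𝕜 n g p =
      ∑ s : Finset (Fin n), mergeVars 𝕜 E F G s (mixedFDeriv 𝕜 s.card sᶜ.card g p) := by
  ext w
  let u : Fin n → E × F := fun i ↦ ((w i).1, 0)
  let v : Fin n → E × F := fun i ↦ (0, (w i).2)
  have hw : w = u + v := by ext i <;> simp [u, v]
  calc iteratedFDeriv 𝕜 n g p w
      = ∑ s : Finset (Fin n), iteratedFDeriv 𝕜 n g p (s.piecewise u v) := by
        rw [hw, ContinuousMultilinearMap.map_add_univ]
    _ = ∑ s : Finset (Fin n), mergeVars 𝕜 E F G s (mixedFDeriv 𝕜 s.card sᶜ.card g p) w := ?_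
    _ = _ := (sum_apply _ _ _).symm
  refine Finset.sum_congr rfl fun s _ ↦ ?_
  have hcard : s.card + sᶜ.card = n := by simp
  rw [mergeVars_apply, mixedFDeriv_apply (hcard.symm ▸ hg),
    ← iteratedFDeriv_iteratedFDeriv_apply (finSumEquivOfFinset (s := s) rfl rfl) hg]
  congr 2
  · funext i
    simp [u]
  · funext i
    simp [v, Finset.piecewise_eq_of_notMem _ _ _
      (Finset.mem_compl.1 (Finset.orderEmbOfFin_mem sᶜ rfl i))]

variable {X Y : Type*} [NormedAddCommGroup X] [NormedSpace 𝕜 X] [NormedAddCommGroup Y]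
  [NormedSpace 𝕜 Y]

theorem norm_iteratedFDeriv_prod_le_sum_mixedFDeriv {a : X → E × F → G} {γ n : ℕ}
    (ha : ContDiff 𝕜 (γ + n : ℕ) (Function.uncurry a)) (x : X) (p : E × F) :
    ‖iteratedFDeriv 𝕜 γ (fun x ↦ iteratedFDeriv 𝕜 n (a x) p) x‖ ≤
      ∑ s : Finset (Fin n),
        ‖iteratedFDeriv 𝕜 γ (fun x ↦ mixedFDeriv 𝕜 s.card sᶜ.card (a x) p) x‖ := by
  have hsplit (x : X) := iteratedFDeriv_prod_eq_sum_mergeVars (g := a x) (n := n)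
    ((ha.of_le (by norm_cast; omega)).comp (contDiff_prodMk_right x)) p
  simp_rw [hsplit]
  refine norm_iteratedFDeriv_sum_clm_le (L := fun s ↦ mergeVars 𝕜 E F G s)
    (f := fun s x ↦ mixedFDeriv 𝕜 s.card sᶜ.card (a x) p) norm_mergeVars_le_one (fun s ↦ ?_) x
  exact contDiff_mixedFDeriv_param ha p (by norm_cast; simp [add_assoc])

theorem norm_iteratedFDeriv₂_prod_le_sum_mixedFDeriv {a : X → Y → E × F → G}
    {γ α n : ℕ} (ha : ContDiff 𝕜 (γ + α + n : ℕ) fun t : X × Y × E × F ↦ a t.1 t.2.1 t.2.2)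
    (x : X) (y : Y) (p : E × F) :
    ‖iteratedFDeriv 𝕜 γ (fun x ↦ iteratedFDeriv 𝕜 α (fun y ↦ iteratedFDeriv 𝕜 n (a x y) p) y) x‖ ≤
      ∑ s : Finset (Fin n), ‖iteratedFDeriv 𝕜 γ (fun x ↦ iteratedFDeriv 𝕜 α
        (fun y ↦ mixedFDeriv 𝕜 s.card sᶜ.card (a x y) p) y) x‖ := by
  have hsplit (x : X) (y : Y) := iteratedFDeriv_prod_eq_sum_mergeVars (g := a x y) (n := n)
    ((ha.of_le (by norm_cast; omega)).comp (f := fun p ↦ (x, y, p)) (by fun_prop)) p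
  simp_rw [hsplit]
  refine norm_iteratedFDeriv₂_sum_clm_le (L := fun s ↦ mergeVars 𝕜 E F G s)
    (f := fun s x y ↦ mixedFDeriv 𝕜 s.card sᶜ.card (a x y) p) norm_mergeVars_le_one
    (fun s ↦ ?_) x y
  exact contDiff_mixedFDeriv_param (f := fun t : X × Y ↦ a t.1 t.2)
    (ha.comp (f := fun t : (X × Y) × E × F ↦ (t.1.1, t.1.2, t.2)) (by fun_prop)) p
    (by norm_cast; simp [add_assoc])

end Symmetry

theorem rpow_le_rpow_abs_mul_rpow {a b c : ℝ} (hb : 0 < b) (hba : b ≤ a) (hab : a ≤ c * b)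
    (s : ℝ) : b ^ s ≤ c ^ |s| * a ^ s := by
  have hc : 1 ≤ c := le_of_mul_le_mul_right (by linarith) hb
  have ha : 0 < a := hb.trans_le hba
  obtain hs | hs := le_total 0 s
  · calc b ^ s ≤ a ^ s := Real.rpow_le_rpow hb.le hba hs
      _ ≤ c ^ |s| * a ^ s :=
        le_mul_of_one_le_left (by positivity) (Real.one_le_rpow hc (abs_nonneg s))
  · have hc_pos : 0 < c := by linarith
    calc b ^ s = c ^ |s| * (c * b) ^ s := by
          rw [Real.mul_rpow hc_pos.le hb.le, ← mul_assoc, ← Real.rpow_add hc_pos, abs_of_nonpos hs,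
            neg_add_cancel, Real.rpow_zero, one_mul]
      _ ≤ c ^ |s| * a ^ s := by
          gcongr ?_ * ?_
          exact Real.rpow_le_rpow_of_nonpos ha hab hs

theorem rpow_mul_rpow_le_rpow_abs_mul_rpow_add {a b c : ℝ} (hb : 0 < b) (hba : b ≤ a)
    (hab : a ≤ c * b) (r s : ℝ) : a ^ r * b ^ s ≤ c ^ |s| * a ^ (r + s) := by
  have ha : 0 < a := hb.trans_le hba
  calc a ^ r * b ^ s ≤ a ^ r * (c ^ |s| * a ^ s) := by
        gcongr
        exact rpow_le_rpow_abs_mul_rpow hb hba hab s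
    _ = c ^ |s| * a ^ (r + s) := by rw [Real.rpow_add ha]; ring

theorem sum_mul_rpow_card_mul_rpow_card_compl_le {a b c Q : ℝ} (hQ : 0 ≤ Q) (hb : 0 < b)
    (hba : b ≤ a) (hab : a ≤ c * b) {n : ℕ} (C : Finset (Fin n) → ℝ) (r t : ℝ) :
    ∑ s, C s * Q * (a ^ (r - s.card) * b ^ (t - sᶜ.card)) ≤
      (∑ s : Finset (Fin n), |C s| * c ^ |t - sᶜ.card|) * (Q * a ^ (r + t - n)) := by
  have ha : 0 < a := hb.trans_le hba
  rw [Finset.sum_mul]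
  refine Finset.sum_le_sum fun s _ ↦ ?_
  have hcard : (s.card : ℝ) + sᶜ.card = n :=
    mod_cast s.card_add_card_compl.trans (Fintype.card_fin n)
  calc C s * Q * (a ^ (r - s.card) * b ^ (t - sᶜ.card))
      ≤ |C s| * Q * (c ^ |t - sᶜ.card| * a ^ (r - s.card + (t - sᶜ.card))) := by
        gcongr ?_ * Q * ?_
        · exact le_abs_self _
        · exact rpow_mul_rpow_le_rpow_abs_mul_rpow_add hb hba hab _ _
    _ = |C s| * c ^ |t - sᶜ.card| * (Q * a ^ (r + t - n)) := by
        rw [sub_add_sub_comm, hcard]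
        ring

/-- The Japanese bracket of a vector of any normed space, extending `jap`. -/
noncomputable def bracket {U : Type*} [Norm U] (u : U) : ℝ :=
  Real.sqrt (1 + ‖u‖ ^ 2)

/-- The Japanese bracket of a pair; the product carries the Euclidean, not the supremum, norm. -/
noncomputable def bracket₂ {U V : Type*} [Norm U] [Norm V] (u : U) (v : V) : ℝ :=
  Real.sqrt (1 + ‖u‖ ^ 2 + ‖v‖ ^ 2)

/-- The Japanese bracket of a triple; the product carries the Euclidean, not the supremum, norm. -/
noncomputable def bracket₃ {U V W : Type*} [Norm U] [Norm V] [Norm W] (u : U) (v : V)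
    (w : W) : ℝ :=
  Real.sqrt (1 + ‖u‖ ^ 2 + ‖v‖ ^ 2 + ‖w‖ ^ 2)

section Bracket

variable {U V W : Type*} [SeminormedAddGroup U] [SeminormedAddGroup V] [SeminormedAddGroup W]

theorem bracket_pos (u : U) : 0 < bracket u :=
  Real.sqrt_pos.2 (by positivity)

theorem bracket₂_pos (u : U) (v : V) : 0 < bracket₂ u v :=
  Real.sqrt_pos.2 (by positivity)

theorem bracket₃_pos (u : U) (v : V) (w : W) : 0 < bracket₃ u v w :=
  Real.sqrt_pos.2 (by positivity)

theorem bracket_le_bracket₂ (u : U) (v : V) : bracket v ≤ bracket₂ u v :=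
  Real.sqrt_le_sqrt (by linarith [sq_nonneg ‖u‖])

theorem bracket₂_le_bracket₃ (u : U) (v : V) (w : W) : bracket₂ v w ≤ bracket₃ u v w :=
  Real.sqrt_le_sqrt (by linarith [sq_nonneg ‖u‖])

theorem bracket₂_le_two_mul_bracket {u : U} {v : V} (h : ‖u‖ ≤ ‖v‖) :
    bracket₂ u v ≤ 2 * bracket v := by
  have hsq : ‖u‖ ^ 2 ≤ ‖v‖ ^ 2 := by gcongr
  refine Real.sqrt_le_iff.2 ⟨mul_nonneg zero_le_two (bracket_pos v).le, ?_⟩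
  rw [mul_pow, bracket, Real.sq_sqrt (by positivity)]
  linarith [sq_nonneg ‖v‖]

theorem bracket₃_le_two_mul_bracket₂ {u : U} {v : V} (h : ‖u‖ ≤ ‖v‖) (w : W) :
    bracket₃ u v w ≤ 2 * bracket₂ v w := by
  have hsq : ‖u‖ ^ 2 ≤ ‖v‖ ^ 2 := by gcongr
  refine Real.sqrt_le_iff.2 ⟨mul_nonneg zero_le_two (bracket₂_pos v w).le, ?_⟩
  rw [mul_pow, bracket₂, Real.sq_sqrt (by positivity)]
  linarith [sq_nonneg ‖v‖, sq_nonneg ‖w‖]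

end Bracket

section TripleSymbol

variable {X U V W G : Type*} [NormedAddCommGroup X] [NormedSpace ℝ X]
  [NormedAddCommGroup U] [NormedSpace ℝ U] [NormedAddCommGroup V] [NormedSpace ℝ V]
  [NormedAddCommGroup W] [NormedSpace ℝ W] [NormedAddCommGroup G] [NormedSpace ℝ G]

/-- Triple symbol-valued symbols of order `(M₁, M₂, M₃)`: the amplitudes of nested triple conormal
distributions, with base variable in `X` and frequencies in `U`, `V` and `W`. -/
structure IsTripleSymbol (M₁ M₂ M₃ : ℝ) (a : X → U → V → W → G) : Prop where
  contDiff : ContDiff ℝ (⊤ : ℕ∞) fun p : X × U × V × W ↦ a p.1 p.2.1 p.2.2.1 p.2.2.2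
  exists_norm_le : ∀ γ α β η : ℕ, ∃ C : ℝ, ∀ x u v w,
    ‖iteratedFDeriv ℝ γ (fun x ↦ iteratedFDeriv ℝ α (fun u ↦ iteratedFDeriv ℝ β
      (fun v ↦ iteratedFDeriv ℝ η (fun w ↦ a x u v w) w) v) u) x‖ ≤
    C * bracket₃ u v w ^ (M₁ - (α : ℝ)) * bracket₂ v w ^ (M₂ - (β : ℝ)) *
      bracket w ^ (M₃ - (η : ℝ))

variable {M₁ M₂ M₃ : ℝ} {a : X → U → V → W → G}

theorem IsTripleSymbol.exists_norm_le_of_norm_fst_le (ha : IsTripleSymbol M₁ M₂ M₃ a)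
    (γ α η : ℕ) :
    ∃ C : ℝ, ∀ (x : X) (p : U × V) (w : W), ‖p.1‖ ≤ ‖p.2‖ →
      ‖iteratedFDeriv ℝ γ (fun x ↦ iteratedFDeriv ℝ α
        (fun p : U × V ↦ iteratedFDeriv ℝ η (fun w ↦ a x p.1 p.2 w) w) p) x‖ ≤
      C * bracket₃ p.1 p.2 w ^ (M₁ + M₂ - (α : ℝ)) * bracket w ^ (M₃ - (η : ℝ)) := by
  choose C hC using fun s : Finset (Fin α) ↦ ha.exists_norm_le γ s.card sᶜ.card η
  refine ⟨∑ s, |C s| * 2 ^ |M₂ - (sᶜ.card : ℝ)|, fun x p w hp ↦ ?_⟩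
  have hsmooth : ContDiff ℝ (γ + α : ℕ) fun t : X × U × V ↦
      iteratedFDeriv ℝ η (fun w ↦ a t.1 t.2.1 t.2.2 w) w :=
    contDiff_iteratedFDeriv_param (f := fun (t : X × U × V) w ↦ a t.1 t.2.1 t.2.2 w)
      (ha.contDiff.comp
        (f := fun t : (X × U × V) × W ↦ (t.1.1, t.1.2.1, t.1.2.2, t.2)) (by fun_prop))
      contDiff_const (by exact_mod_cast le_top)
  calc ‖iteratedFDeriv ℝ γ (fun x ↦ iteratedFDeriv ℝ α
        (fun p : U × V ↦ iteratedFDeriv ℝ η (fun w ↦ a x p.1 p.2 w) w) p) x‖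
      ≤ ∑ s : Finset (Fin α), C s * bracket w ^ (M₃ - (η : ℝ)) *
          (bracket₃ p.1 p.2 w ^ (M₁ - s.card) * bracket₂ p.2 w ^ (M₂ - sᶜ.card)) :=
        (norm_iteratedFDeriv_prod_le_sum_mixedFDeriv hsmooth x p).trans <|
          Finset.sum_le_sum fun s _ ↦ (hC s x p.1 p.2 w).trans_eq (by ring)
    _ ≤ (∑ s, |C s| * 2 ^ |M₂ - (sᶜ.card : ℝ)|) *
          (bracket w ^ (M₃ - (η : ℝ)) * bracket₃ p.1 p.2 w ^ (M₁ + M₂ - (α : ℝ))) :=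
        sum_mul_rpow_card_mul_rpow_card_compl_le (Real.rpow_nonneg (bracket_pos w).le _)
          (bracket₂_pos p.2 w) (bracket₂_le_bracket₃ p.1 p.2 w)
          (bracket₃_le_two_mul_bracket₂ hp w) C M₁ M₂
    _ = _ := by ring

theorem IsTripleSymbol.exists_norm_le_of_norm_snd_le (ha : IsTripleSymbol M₁ M₂ M₃ a)
    (γ α β : ℕ) :
    ∃ C : ℝ, ∀ (x : X) (u : U) (q : V × W), ‖q.1‖ ≤ ‖q.2‖ →
      ‖iteratedFDeriv ℝ γ (fun x ↦ iteratedFDeriv ℝ α (fun u ↦ iteratedFDeriv ℝ β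
        (fun q : V × W ↦ a x u q.1 q.2) q) u) x‖ ≤
      C * bracket₃ u q.1 q.2 ^ (M₁ - (α : ℝ)) * bracket₂ q.1 q.2 ^ (M₂ + M₃ - (β : ℝ)) := by
  choose C hC using fun s : Finset (Fin β) ↦ ha.exists_norm_le γ α s.card sᶜ.card
  refine ⟨∑ s, |C s| * 2 ^ |M₃ - (sᶜ.card : ℝ)|, fun x u q hq ↦ ?_⟩
  have hsmooth : ContDiff ℝ (γ + α + β : ℕ) fun t : X × U × V × W ↦ a t.1 t.2.1 t.2.2.1 t.2.2.2 :=
    ha.contDiff.of_le (by exact_mod_cast le_top)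
  calc ‖iteratedFDeriv ℝ γ (fun x ↦ iteratedFDeriv ℝ α (fun u ↦ iteratedFDeriv ℝ β
        (fun q : V × W ↦ a x u q.1 q.2) q) u) x‖
      ≤ ∑ s : Finset (Fin β), C s * bracket₃ u q.1 q.2 ^ (M₁ - (α : ℝ)) *
          (bracket₂ q.1 q.2 ^ (M₂ - s.card) * bracket q.2 ^ (M₃ - sᶜ.card)) :=
        (norm_iteratedFDeriv₂_prod_le_sum_mixedFDeriv
          (a := fun x u (q : V × W) ↦ a x u q.1 q.2) hsmooth x u q).trans <|
          Finset.sum_le_sum fun s _ ↦ (hC s x u q.1 q.2).trans_eq (mul_assoc _ _ _)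
    _ ≤ (∑ s, |C s| * 2 ^ |M₃ - (sᶜ.card : ℝ)|) *
          (bracket₃ u q.1 q.2 ^ (M₁ - (α : ℝ)) * bracket₂ q.1 q.2 ^ (M₂ + M₃ - (β : ℝ))) :=
        sum_mul_rpow_card_mul_rpow_card_compl_le (Real.rpow_nonneg (bracket₃_pos u q.1 q.2).le _)
          (bracket_pos q.2) (bracket_le_bracket₂ q.1 q.2) (bracket₂_le_two_mul_bracket hq) C M₂ M₃
    _ = _ := (mul_assoc _ _ _).symm

theorem stmt17_general (ha : IsTripleSymbol M₁ M₂ M₃ a) :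
    (∀ γ α η : ℕ, ∃ C : ℝ, ∀ (x : X) (p : U × V) (w : W), ‖p.1‖ ≤ ‖p.2‖ →
      ‖iteratedFDeriv ℝ γ (fun x ↦ iteratedFDeriv ℝ α
        (fun p : U × V ↦ iteratedFDeriv ℝ η (fun w ↦ a x p.1 p.2 w) w) p) x‖ ≤
      C * bracket₃ p.1 p.2 w ^ (M₁ + M₂ - (α : ℝ)) * bracket w ^ (M₃ - (η : ℝ))) ∧
    (∀ γ α β : ℕ, ∃ C : ℝ, ∀ (x : X) (u : U) (q : V × W), ‖q.1‖ ≤ ‖q.2‖ →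
      ‖iteratedFDeriv ℝ γ (fun x ↦ iteratedFDeriv ℝ α (fun u ↦ iteratedFDeriv ℝ β
        (fun q : V × W ↦ a x u q.1 q.2) q) u) x‖ ≤
      C * bracket₃ u q.1 q.2 ^ (M₁ - (α : ℝ)) * bracket₂ q.1 q.2 ^ (M₂ + M₃ - (β : ℝ))) :=
  ⟨ha.exists_norm_le_of_norm_fst_le, ha.exists_norm_le_of_norm_snd_le⟩

end TripleSymbol

/-- Region estimates for a triple symbol-valued symbol of order `(M₁,M₂,M₃)`:
where `|ξ′| ≤ |ξ″|` it behaves as a symbol-valued symbol of order `(M₁+M₂, M₃)`,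
and where `|ξ″| ≤ |ξ‴|` as one of order `(M₁, M₂+M₃)`. -/
theorem stmt17 (n d₁ d₂ d₃ : ℕ) (hn : 1 ≤ n) (hd₁ : 1 ≤ d₁) (hd₂ : 1 ≤ d₂)
    (hd₃ : 1 ≤ d₃) (M₁ M₂ M₃ : ℝ)
    (a : EuclideanSpace ℝ (Fin n) → EuclideanSpace ℝ (Fin d₁) →
      EuclideanSpace ℝ (Fin d₂) → EuclideanSpace ℝ (Fin d₃) → ℂ)
    (ha_smooth : ContDiff ℝ (⊤ : ℕ∞)
      (fun p : EuclideanSpace ℝ (Fin n) × EuclideanSpace ℝ (Fin d₁) ×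
          EuclideanSpace ℝ (Fin d₂) × EuclideanSpace ℝ (Fin d₃) =>
        a p.1 p.2.1 p.2.2.1 p.2.2.2))
    (ha : ∀ γ α β η : ℕ, ∃ C : ℝ, ∀ x ξ' ξ'' ξ''',
      ‖iteratedFDeriv ℝ γ (fun x => iteratedFDeriv ℝ α (fun ξ' =>
          iteratedFDeriv ℝ β (fun ξ'' => iteratedFDeriv ℝ η (fun ξ''' =>
            a x ξ' ξ'' ξ''') ξ''') ξ'') ξ') x‖ ≤
        C * jap3 ξ' ξ'' ξ''' ^ (M₁ - (α : ℝ)) * jap2 ξ'' ξ''' ^ (M₂ - (β : ℝ)) *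
          jap ξ''' ^ (M₃ - (η : ℝ))) :
    (∀ γ α η : ℕ, ∃ C' : ℝ,
      ∀ (x : EuclideanSpace ℝ (Fin n))
        (p : EuclideanSpace ℝ (Fin d₁) × EuclideanSpace ℝ (Fin d₂))
        (ξ''' : EuclideanSpace ℝ (Fin d₃)), ‖p.1‖ ≤ ‖p.2‖ →
      ‖iteratedFDeriv ℝ γ (fun x => iteratedFDeriv ℝ α
          (fun p : EuclideanSpace ℝ (Fin d₁) × EuclideanSpace ℝ (Fin d₂) =>
            iteratedFDeriv ℝ η (fun ξ''' => a x p.1 p.2 ξ''') ξ''') p) x‖ ≤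
        C' * jap3 p.1 p.2 ξ''' ^ (M₁ + M₂ - (α : ℝ)) * jap ξ''' ^ (M₃ - (η : ℝ))) ∧
    (∀ γ α β : ℕ, ∃ C' : ℝ,
      ∀ (x : EuclideanSpace ℝ (Fin n)) (ξ' : EuclideanSpace ℝ (Fin d₁))
        (q : EuclideanSpace ℝ (Fin d₂) × EuclideanSpace ℝ (Fin d₃)), ‖q.1‖ ≤ ‖q.2‖ →
      ‖iteratedFDeriv ℝ γ (fun x => iteratedFDeriv ℝ α (fun ξ' =>
          iteratedFDeriv ℝ β
            (fun q : EuclideanSpace ℝ (Fin d₂) × EuclideanSpace ℝ (Fin d₃) =>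
              a x ξ' q.1 q.2) q) ξ') x‖ ≤
        C' * jap3 ξ' q.1 q.2 ^ (M₁ - (α : ℝ)) * jap2 q.1 q.2 ^ (M₂ + M₃ - (β : ℝ))) :=
  stmt17_general ⟨ha_smooth, ha⟩
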